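/- arXiv:1903.04187 — 2 statements merged into one kernel-verified Lean document; each statement's English description precedes it below -/
import Mathlib

section
/- Let b : ℝ² → ℝ be smooth, Λ-periodic, even, and R-invariant (b(Rᵀx) = b(x) for all x), and set B(x) = b(x)·σ₂. Let Φ₁ : ℝ² → ℂ be smooth, K-pseudo-periodic, and satisfy Φ₁(Rᵀx) = τ·Φ₁(x) for all x, and define Φ₂(x) = conj(Φ₁(−x)). Then ∫_Ω conj(Φ₁(x))·(L^B Φ₂)(x) dx = 0 and ∫_Ω conj(Φ₂(x))·(L^B Φ₁)(x) dx = 0. -/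
/-!
Write `[b, φ] = ∂₁b ∂₂φ - ∂₂b ∂₁φ`. Since `σ₂` is antisymmetric, the second derivatives of `φ`
cancel and `L^B φ = i [b, φ]` (`LM_eq`). This Jacobian bracket commutes with lattice translations
and with the rotation `Rᵀ`, so `L^B` preserves pseudo-periodicity and the rotation eigenvalue
of `φ`.

The function `Φ₂` is pseudo-periodic with rotation eigenvalue `conj τ`. Hence both integrands `f` are
continuous, `Λ`-periodic and satisfy `f (Rᵀ x) = c f x` with `c = conj τ ^ 2` or `c = τ ^ 2`. The
integral over a cell of a periodic function is invariant under the lattice symmetry `Rᵀ`, so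
`∫ f = c ∫ f`, and the integral vanishes because `c ≠ 1` (`integral_cell_eq_zero`). In the
coordinates `θ`, `Rᵀ` acts by `(s, t) ↦ (t, -s - t)`, and the invariance of the integral reduces to
Fubini and the translation and reflection invariance of one-dimensional integrals over a period.
-/

noncomputable section

open MeasureTheory

/-- Points of the plane. -/
abbrev Vec : Type := Fin 2 → ℝ

/-- Standard dot product on ℝ². -/
def dot (x y : Vec) : ℝ := x 0 * y 0 + x 1 * y 1

/-- Lattice vector v₁. -/
def latv₁ : Vec := ![Real.sqrt 3 / 2, 1 / 2]

/-- Lattice vector v₂. -/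
def latv₂ : Vec := ![Real.sqrt 3 / 2, -(1 / 2)]

/-- The triangular lattice Λ = ℤv₁ ⊕ ℤv₂. -/
def TriLat : Set Vec := {v | ∃ m₁ m₂ : ℤ, v = (m₁ : ℝ) • latv₁ + (m₂ : ℝ) • latv₂}

/-- The fundamental cell Ω. -/
def cellΩ : Set Vec :=
  {x | ∃ θ₁ ∈ Set.Icc (0:ℝ) 1, ∃ θ₂ ∈ Set.Icc (0:ℝ) 1, x = θ₁ • latv₁ + θ₂ • latv₂}

/-- Dual lattice vector k₁. -/
def dualk₁ : Vec := (4 * Real.sqrt 3 * Real.pi / 3) • ![1 / 2, Real.sqrt 3 / 2]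

/-- Dual lattice vector k₂. -/
def dualk₂ : Vec := (4 * Real.sqrt 3 * Real.pi / 3) • ![1 / 2, -(Real.sqrt 3 / 2)]

/-- The high-symmetry point K = (k₁ − k₂)/3. -/
def Kpt : Vec := (3:ℝ)⁻¹ • (dualk₁ - dualk₂)

/-- `f` is K-pseudo-periodic: f(x+v) = e^{iK·v} f(x) for all x and all v ∈ Λ. -/
def PseudoPeriodic (f : Vec → ℂ) : Prop :=
  ∀ x : Vec, ∀ v ∈ TriLat, f (x + v) = Complex.exp (Complex.I * (dot Kpt v : ℂ)) * f x

/-- The partial derivative ∂ᵢ of a ℂ-valued function on ℝ². -/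
def pd (i : Fin 2) (f : Vec → ℂ) : Vec → ℂ := fun x => fderiv ℝ f x (Pi.single i 1)

/-- The Pauli matrix σ₂. -/
def σ₂ : Matrix (Fin 2) (Fin 2) ℂ := !![0, -Complex.I; Complex.I, 0]

/-- The second order operator L^M φ = −∇·(M∇φ). -/
def LM (M : Vec → Matrix (Fin 2) (Fin 2) ℂ) (φ : Vec → ℂ) : Vec → ℂ :=
  fun x => -(∑ i : Fin 2, pd i (fun y => ∑ j : Fin 2, M y i j * pd j φ y) x)

/-- The clockwise 2π/3 rotation matrix R. -/
def Rrot : Matrix (Fin 2) (Fin 2) ℝ :=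
  !![-(1 / 2), Real.sqrt 3 / 2; -(Real.sqrt 3 / 2), -(1 / 2)]

/-- The action x ↦ Rᵀx. -/
def Rt (x : Vec) : Vec := Rrot.transpose.mulVec x

/-- τ = e^{2πi/3}. -/
def τ : ℂ := Complex.exp (2 * Real.pi * Complex.I / 3)

/-- The first order operator 𝒜, componentwise:
(𝒜φ)ⱼ = (1/i)(Σₖ Aⱼₖ ∂ₖφ + Σᵢ ∂ᵢ(Aᵢⱼ φ)). -/
def calA (A : Vec → Matrix (Fin 2) (Fin 2) ℂ) (φ : Vec → ℂ) (j : Fin 2) : Vec → ℂ :=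
  fun x => Complex.I⁻¹ *
    ((∑ k : Fin 2, A x j k * pd k φ x) + ∑ i : Fin 2, pd i (fun y => A y i j * φ y) x)


/-! ### Integrals over the fundamental cell -/

/-- The map `θ ↦ θ₁ v₁ + θ₂ v₂`, which carries the unit square onto `cellΩ`. -/
def cellMap : Vec →L[ℝ] Vec :=
  (ContinuousLinearMap.proj 0).smulRight latv₁ + (ContinuousLinearMap.proj 1).smulRight latv₂

lemma cellMap_apply (θ : Vec) : cellMap θ = θ 0 • latv₁ + θ 1 • latv₂ := by
  simp [cellMap]

lemma cellMap_injective : Function.Injective cellMap := by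
  intro x y h
  have h3 : Real.sqrt 3 ≠ 0 := by positivity
  rw [cellMap_apply, cellMap_apply] at h
  have h0 := congrFun h 0
  have h1 := congrFun h 1
  simp [latv₁, latv₂] at h0 h1
  have h0' : x 0 + x 1 = y 0 + y 1 := by
    field_simp at h0
    exact h0
  ext i
  fin_cases i
  · simp; linarith
  · simp; linarith

lemma cellΩ_eq : cellΩ = cellMap '' (Set.Icc 0 1) := by
  ext x
  constructor
  · rintro ⟨s, hs, t, ht, rfl⟩
    refine ⟨![s, t], ⟨?_, ?_⟩, by simp [cellMap_apply]⟩
    · intro i; fin_cases i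
      · exact hs.1
      · exact ht.1
    · intro i; fin_cases i
      · exact hs.2
      · exact ht.2
  · rintro ⟨θ, ⟨h0, h1⟩, rfl⟩
    exact ⟨θ 0, ⟨h0 0, h1 0⟩, θ 1, ⟨h0 1, h1 1⟩, cellMap_apply θ⟩

lemma integral_square (g : Vec → ℂ) (hg : Continuous g) :
    ∫ x in Set.Icc (0 : Vec) 1, g x = ∫ s in (0:ℝ)..1, ∫ t in (0:ℝ)..1, g ![s, t] := by
  have hmp := (volume_preserving_finTwoArrow ℝ).symm
  have hpre : (MeasurableEquiv.finTwoArrow (α := ℝ)).symm ⁻¹' (Set.Icc (0 : Vec) 1)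
      = Set.Icc (0:ℝ) 1 ×ˢ Set.Icc (0:ℝ) 1 := by
    ext ⟨s, t⟩
    simp [MeasurableEquiv.finTwoArrow, Pi.le_def, Fin.forall_fin_two]
  rw [← hmp.setIntegral_preimage_emb (MeasurableEquiv.measurableEmbedding _), hpre]
  have hc : Continuous fun p : ℝ × ℝ => g ![p.1, p.2] := by
    refine hg.comp (continuous_pi fun i => ?_)
    fin_cases i
    · exact continuous_fst
    · exact continuous_snd
  have := setIntegral_prod (μ := volume) (ν := volume) (s := Set.Icc (0:ℝ) 1)
    (t := Set.Icc (0:ℝ) 1) (fun p : ℝ × ℝ => g ![p.1, p.2])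
    (hc.continuousOn.integrableOn_compact (isCompact_Icc.prod isCompact_Icc))
  simp only [intervalIntegral.integral_of_le zero_le_one, ← integral_Icc_eq_integral_Ioc]
  exact this

lemma Rt_cellMap (s t : ℝ) : Rt (cellMap ![s, t]) = cellMap ![t, -s - t] := by
  have h3 : Real.sqrt 3 * Real.sqrt 3 = 3 := Real.mul_self_sqrt (by norm_num)
  ext i
  fin_cases i
  · simp [Rt, Rrot, cellMap_apply, latv₁, latv₂, Matrix.mulVec, dotProduct, Fin.sum_univ_two]
    ring
  · simp [Rt, Rrot, cellMap_apply, latv₁, latv₂, Matrix.mulVec, dotProduct, Fin.sum_univ_two]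
    linear_combination (s + t) / 4 * h3

/-- A continuous `Λ`-periodic rotation eigenfunction with eigenvalue `c ≠ 1` has mean zero. -/
lemma integral_cell_eq_zero (f : Vec → ℂ) (hf : Continuous f)
    (hper : ∀ x, ∀ v ∈ TriLat, f (x + v) = f x) (c : ℂ) (hc : c ≠ 1)
    (hrot : ∀ x, f (Rt x) = c * f x) : ∫ x in cellΩ, f x = 0 := by
  rw [cellΩ_eq, integral_image_eq_integral_abs_det_fderiv_smul volume measurableSet_Icc
    (fun x _ => cellMap.hasFDerivAt.hasFDerivWithinAt) cellMap_injective.injOn, integral_smul]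
  have hgc : Continuous fun x => f (cellMap x) := hf.comp cellMap.continuous
  rw [integral_square _ hgc]
  set g : ℝ → ℝ → ℂ := fun s t => f (cellMap ![s, t]) with hg
  have hg2 : Continuous fun p : ℝ × ℝ => g p.1 p.2 := by
    refine hgc.comp (continuous_pi fun i => ?_)
    fin_cases i
    · exact continuous_fst
    · exact continuous_snd
  have hgrot : ∀ s t, g t (-s - t) = c * g s t := by
    intro s t
    simp only [hg]
    rw [← Rt_cellMap, hrot]
  have hgper : ∀ s, Function.Periodic (g s) 1 := by
    intro s t
    simp only [hg]
    rw [← hper (cellMap ![s, t]) latv₂ ⟨0, 1, by simp⟩]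
    congr 1
    simp [cellMap_apply, add_smul, add_assoc]
  -- In the variable `s`, the rotated function runs once, backwards, through a period of `g t`.
  have hinner : ∀ t, ∫ s in (0:ℝ)..1, g t (-s - t) = ∫ s in (0:ℝ)..1, g t s := by
    intro t
    have h1 : ∫ s in (0:ℝ)..1, g t (-s - t) = ∫ s in (-t - 1)..(-t - 0), g t s := by
      rw [← intervalIntegral.integral_comp_sub_left (fun s => g t s) (-t)]
      congr 1
      ext s
      congr 1
      ring
    have h2 := (hgper t).intervalIntegral_add_eq (-t - 1) 0
    rw [h1]
    convert h2 using 2 <;> ring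
  have key : c * (∫ s in (0:ℝ)..1, ∫ t in (0:ℝ)..1, g s t)
      = ∫ s in (0:ℝ)..1, ∫ t in (0:ℝ)..1, g s t := by
    simp only [← intervalIntegral.integral_const_mul, ← hgrot]
    rw [intervalIntegral_intervalIntegral_swap]
    · simp only [hinner]
    · have hcont : Continuous (Function.uncurry fun s t : ℝ => g t (-s - t)) :=
        hg2.comp (by fun_prop : Continuous fun p : ℝ × ℝ => (p.2, -p.1 - p.2))
      rw [Set.uIoc_of_le zero_le_one]
      exact (hcont.continuousOn.integrableOn_compact
        (isCompact_Icc.prod isCompact_Icc)).mono_set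
          (Set.prod_mono Set.Ioc_subset_Icc_self Set.Ioc_subset_Icc_self)
  have : (∫ s in (0:ℝ)..1, ∫ t in (0:ℝ)..1, g s t) = 0 := by
    have h : (c - 1) * (∫ s in (0:ℝ)..1, ∫ t in (0:ℝ)..1, g s t) = 0 := by
      linear_combination key
    exact (mul_eq_zero.mp h).resolve_left (sub_ne_zero.mpr hc)
  rw [this, smul_zero]

/-! ### Partial derivatives and the operator -/

lemma pd_contDiff {f : Vec → ℂ} (hf : ContDiff ℝ (⊤ : ℕ∞) f) (i : Fin 2) :
    ContDiff ℝ (⊤ : ℕ∞) (pd i f) :=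
  (hf.fderiv_right (m := (⊤ : ℕ∞)) (by simp)).clm_apply contDiff_const

lemma smooth_differentiable {f : Vec → ℂ} (hf : ContDiff ℝ (⊤ : ℕ∞) f) : Differentiable ℝ f :=
  hf.differentiable (by simp)

lemma pd_comm {f : Vec → ℂ} (hf : ContDiff ℝ (⊤ : ℕ∞) f) (i j : Fin 2) (x : Vec) :
    pd i (pd j f) x = pd j (pd i f) x := by
  have hd : DifferentiableAt ℝ (fderiv ℝ f) x :=
    (hf.fderiv_right (m := (⊤ : ℕ∞)) (by simp)).differentiable (by simp) x
  have h : ∀ i j, pd i (pd j f) x = fderiv ℝ (fderiv ℝ f) x (Pi.single i 1) (Pi.single j 1) := by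
    intro i j
    unfold pd
    rw [fderiv_clm_apply hd (differentiableAt_const _)]
    simp
  rw [h, h]
  exact (hf.contDiffAt.isSymmSndFDerivAt (by simpa using WithTop.coe_le_coe.mpr (le_top : (2 : ℕ∞) ≤ ⊤))).eq _ _

lemma pd_mul {f g : Vec → ℂ} (hf : Differentiable ℝ f) (hg : Differentiable ℝ g) (i : Fin 2)
    (x : Vec) : pd i (fun y => f y * g y) x = f x * pd i g x + g x * pd i f x := by
  simp [pd, fderiv_fun_mul (hf x) (hg x)]

lemma pd_const_mul {f : Vec → ℂ} (hf : Differentiable ℝ f) (c : ℂ) (i : Fin 2) (x : Vec) :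
    pd i (fun y => c * f y) x = c * pd i f x := by
  simp [pd, fderiv_const_mul (hf x) c]

/-- For `B = β σ₂` the operator `L^B` is of first order: `L^B φ = i (∂₁β ∂₂φ - ∂₂β ∂₁φ)`. -/
lemma LM_eq {β φ : Vec → ℂ} (hβ : ContDiff ℝ (⊤ : ℕ∞) β) (hφ : ContDiff ℝ (⊤ : ℕ∞) φ)
    {B : Vec → Matrix (Fin 2) (Fin 2) ℂ} (hB : ∀ x, B x = β x • σ₂) (x : Vec) :
    LM B φ x = Complex.I * (pd 0 β x * pd 1 φ x - pd 1 β x * pd 0 φ x) := by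
  have h0 : (fun y => ∑ j : Fin 2, B y 0 j * pd j φ y)
      = fun y => (-Complex.I) * (β y * pd 1 φ y) := by
    ext y; simp [hB, σ₂, Fin.sum_univ_two]; ring
  have h1 : (fun y => ∑ j : Fin 2, B y 1 j * pd j φ y)
      = fun y => Complex.I * (β y * pd 0 φ y) := by
    ext y; simp [hB, σ₂, Fin.sum_univ_two]; ring
  have dβ := smooth_differentiable hβ
  have d0 := smooth_differentiable (pd_contDiff hφ 0)
  have d1 := smooth_differentiable (pd_contDiff hφ 1)
  rw [LM, Fin.sum_univ_two, h0, h1, pd_const_mul (dβ.fun_mul d1), pd_const_mul (dβ.fun_mul d0),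
    pd_mul dβ d1, pd_mul dβ d0, pd_comm hφ 0 1]
  ring

lemma pd_add_of_eq {f : Vec → ℂ} (hf : Differentiable ℝ f) {v : Vec} {c : ℂ}
    (h : ∀ x, f (x + v) = c * f x) (i : Fin 2) (x : Vec) : pd i f (x + v) = c * pd i f x := by
  rw [← pd_const_mul hf]
  simp only [← h]
  simp [pd, fderiv_comp_add_right]

lemma Rt_single (i : Fin 2) : Rt (Pi.single i 1) = Rrot.transpose.col i := by
  simp [Rt]

/-- Differentiating `f (Rᵀ x) = c f x`. -/
lemma pd_Rt_of_eq {f : Vec → ℂ} (hf : Differentiable ℝ f) {c : ℂ}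
    (h : ∀ x, f (Rt x) = c * f x) (x : Vec) (i : Fin 2) :
    (Rrot i 0 : ℂ) * pd 0 f (Rt x) + (Rrot i 1 : ℂ) * pd 1 f (Rt x) = c * pd i f x := by
  rw [← pd_const_mul hf c i x]
  simp only [← h]
  let T : Vec →L[ℝ] Vec := Matrix.mulVecLin Rrot.transpose |>.toContinuousLinearMap
  have hT : ∀ y, T y = Rt y := fun y => rfl
  have hcomp : fderiv ℝ (fun y => f (Rt y)) x = (fderiv ℝ f (Rt x)).comp T :=
    ((hf (Rt x)).hasFDerivAt.comp x (T.hasFDerivAt (x := x))).fderiv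
  have hv : T (Pi.single i 1) = Rrot i 0 • Pi.single 0 1 + Rrot i 1 • Pi.single 1 1 := by
    rw [hT, Rt_single]
    ext j
    fin_cases j <;> simp [Matrix.col]
  simp only [pd]
  rw [hcomp, ContinuousLinearMap.comp_apply, hv, map_add, map_smul, map_smul]
  simp

/-- The bracket `∂₁β ∂₂φ - ∂₂β ∂₁φ` is covariant under the rotation since `det R = 1`. -/
lemma bracket_Rt {β φ : Vec → ℂ} (hβ : Differentiable ℝ β) (hφ : Differentiable ℝ φ) {c : ℂ}
    (hβr : ∀ x, β (Rt x) = β x) (hφr : ∀ x, φ (Rt x) = c * φ x) (x : Vec) :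
    pd 0 β (Rt x) * pd 1 φ (Rt x) - pd 1 β (Rt x) * pd 0 φ (Rt x)
      = c * (pd 0 β x * pd 1 φ x - pd 1 β x * pd 0 φ x) := by
  have hβr' : ∀ x, β (Rt x) = 1 * β x := by simpa using hβr
  have a0 := pd_Rt_of_eq hβ hβr' x 0
  have a1 := pd_Rt_of_eq hβ hβr' x 1
  have b0 := pd_Rt_of_eq hφ hφr x 0
  have b1 := pd_Rt_of_eq hφ hφr x 1
  have h3 : (Real.sqrt 3 : ℂ) * Real.sqrt 3 = 3 := by
    rw [← Complex.ofReal_mul, Real.mul_self_sqrt (by norm_num)]; norm_num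
  have hdet : (Rrot 0 0 * Rrot 1 1 - Rrot 0 1 * Rrot 1 0 : ℂ) = 1 := by
    simp [Rrot]
    linear_combination h3 / 4
  rw [one_mul] at a0 a1
  calc _ = (Rrot 0 0 * Rrot 1 1 - Rrot 0 1 * Rrot 1 0 : ℂ) *
        (pd 0 β (Rt x) * pd 1 φ (Rt x) - pd 1 β (Rt x) * pd 0 φ (Rt x)) := by rw [hdet, one_mul]
    _ = pd 0 β x * (c * pd 1 φ x) - pd 1 β x * (c * pd 0 φ x) := by
        rw [← a0, ← a1, ← b0, ← b1]; ring
    _ = _ := by ring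

/-! ### Vanishing of the cross terms -/

lemma inner_LM_eq_zero {β ψ φ : Vec → ℂ} (hβ : ContDiff ℝ (⊤ : ℕ∞) β)
    (hψ : ContDiff ℝ (⊤ : ℕ∞) ψ) (hφ : ContDiff ℝ (⊤ : ℕ∞) φ)
    {B : Vec → Matrix (Fin 2) (Fin 2) ℂ} (hB : ∀ x, B x = β x • σ₂)
    (hβp : ∀ x, ∀ v ∈ TriLat, β (x + v) = β x) (hβr : ∀ x, β (Rt x) = β x)
    (hψp : PseudoPeriodic ψ) (hφp : PseudoPeriodic φ) {a d : ℂ}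
    (hψr : ∀ x, ψ (Rt x) = a * ψ x) (hφr : ∀ x, φ (Rt x) = d * φ x)
    (had : (starRingEnd ℂ) a * d ≠ 1) :
    ∫ x in cellΩ, (starRingEnd ℂ) (ψ x) * LM B φ x = 0 := by
  have dβ := smooth_differentiable hβ
  have dφ := smooth_differentiable hφ
  refine integral_cell_eq_zero _ ?_ ?_ _ had ?_
  · simp only [LM_eq hβ hφ hB]
    have c1 := (pd_contDiff hβ 0).continuous
    have c2 := (pd_contDiff hβ 1).continuous
    have c3 := (pd_contDiff hφ 0).continuous
    have c4 := (pd_contDiff hφ 1).continuous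
    have c5 := Complex.continuous_conj.comp hψ.continuous
    exact c5.mul (continuous_const.mul ((c1.mul c4).sub (c2.mul c3)))
  · intro x v hv
    have hβp' : ∀ x, β (x + v) = 1 * β x := fun x => by rw [hβp x v hv, one_mul]
    have hφp' := fun x => hφp x v hv
    -- The Bloch phases of the two factors cancel.
    have hphase : (starRingEnd ℂ) (Complex.exp (Complex.I * (dot Kpt v : ℂ)))
        * Complex.exp (Complex.I * (dot Kpt v : ℂ)) = 1 := by
      rw [← Complex.exp_conj, ← Complex.exp_add]
      simp
    simp only [LM_eq hβ hφ hB]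
    rw [pd_add_of_eq dβ hβp', pd_add_of_eq dβ hβp', pd_add_of_eq dφ hφp',
      pd_add_of_eq dφ hφp', hψp x v hv, map_mul]
    linear_combination ((starRingEnd ℂ) (ψ x) *
      (Complex.I * (pd 0 β x * pd 1 φ x - pd 1 β x * pd 0 φ x))) * hphase
  · intro x
    simp only [LM_eq hβ hφ hB]
    rw [bracket_Rt dβ dφ hβr hφr, hψr, map_mul]
    ring

lemma τ_mul_τ_ne_one : τ * τ ≠ 1 := by
  rw [τ, ← Complex.exp_add, Ne, Complex.exp_eq_one_iff]
  rintro ⟨n, hn⟩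
  have hpi : (2 * Real.pi * Complex.I : ℂ) ≠ 0 := Complex.two_pi_I_ne_zero
  have h : (2 * Real.pi * Complex.I : ℂ) * (2 - 3 * n) = 0 := by
    linear_combination 3 * hn
  have h2 : (2 - 3 * n : ℂ) = 0 := (mul_eq_zero.mp h).resolve_left hpi
  have h4 : (2 - 3 * n : ℤ) = 0 := by exact_mod_cast h2
  omega

/-- With b additionally R-invariant and Φ₁ satisfying
Φ₁(Rᵀx) = τΦ₁(x), the cross terms vanish:
⟨Φ₁, L^B Φ₂⟩_{L²(Ω)} = 0 and ⟨Φ₂, L^B Φ₁⟩_{L²(Ω)} = 0. -/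
theorem stmt1 (b : Vec → ℝ) (hb_smooth : ContDiff ℝ (⊤ : ℕ∞) b)
    (hb_per : ∀ x : Vec, ∀ v ∈ TriLat, b (x + v) = b x)
    (hb_even : ∀ x : Vec, b (-x) = b x)
    (hb_rot : ∀ x : Vec, b (Rt x) = b x)
    (B : Vec → Matrix (Fin 2) (Fin 2) ℂ)
    (hB : ∀ x, B x = (b x : ℂ) • σ₂)
    (Φ₁ : Vec → ℂ) (hΦ₁_smooth : ContDiff ℝ (⊤ : ℕ∞) Φ₁) (hΦ₁_pp : PseudoPeriodic Φ₁)
    (hΦ₁_rot : ∀ x : Vec, Φ₁ (Rt x) = τ * Φ₁ x)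
    (Φ₂ : Vec → ℂ) (hΦ₂ : ∀ x, Φ₂ x = (starRingEnd ℂ) (Φ₁ (-x))) :
    (∫ x in cellΩ, (starRingEnd ℂ) (Φ₁ x) * LM B Φ₂ x) = 0 ∧
    (∫ x in cellΩ, (starRingEnd ℂ) (Φ₂ x) * LM B Φ₁ x) = 0 := by
  have hβ : ContDiff ℝ (⊤ : ℕ∞) fun x => (b x : ℂ) := Complex.ofRealCLM.contDiff.comp hb_smooth
  have hΦ₂' : Φ₂ = fun x => (starRingEnd ℂ) (Φ₁ (-x)) := funext hΦ₂
  have hΦ₂_smooth : ContDiff ℝ (⊤ : ℕ∞) Φ₂ := by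
    rw [hΦ₂']
    exact Complex.conjCLE.contDiff.comp (hΦ₁_smooth.comp contDiff_neg)
  have hΦ₂_pp : PseudoPeriodic Φ₂ := by
    intro x v hv
    have hnv : -v ∈ TriLat := by
      obtain ⟨m, n, rfl⟩ := hv
      exact ⟨-m, -n, by push_cast; simp only [neg_smul]; abel⟩
    rw [hΦ₂, hΦ₂, neg_add, hΦ₁_pp _ _ hnv, map_mul, ← Complex.exp_conj]
    congr 2
    simp [dot]
    ring
  have hΦ₂_rot : ∀ x, Φ₂ (Rt x) = (starRingEnd ℂ) τ * Φ₂ x := by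
    intro x
    have : -Rt x = Rt (-x) := by simp [Rt, Matrix.mulVec_neg]
    rw [hΦ₂, hΦ₂, this, hΦ₁_rot, map_mul]
  have hβp : ∀ x, ∀ v ∈ TriLat, (b (x + v) : ℂ) = b x := fun x v hv => by rw [hb_per x v hv]
  have hβr : ∀ x, (b (Rt x) : ℂ) = b x := fun x => by rw [hb_rot]
  refine ⟨inner_LM_eq_zero hβ hΦ₁_smooth hΦ₂_smooth hB hβp hβr hΦ₁_pp hΦ₂_pp hΦ₁_rot hΦ₂_rot ?_,
    inner_LM_eq_zero hβ hΦ₂_smooth hΦ₁_smooth hB hβp hβr hΦ₂_pp hΦ₁_pp hΦ₂_rot hΦ₁_rot ?_⟩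
  · rw [← map_mul]
    intro h
    exact τ_mul_τ_ne_one (by simpa using congrArg (starRingEnd ℂ) h)
  · rw [Complex.conj_conj]
    exact τ_mul_τ_ne_one
end
end

section
/- Let A : ℝ² → ℂ^{2×2} be smooth, Λ-periodic, and R-equivariant, i.e. A(Rᵀx) = Rᵀ·A(x)·R for all x ∈ ℝ². Let Φ : ℝ² → ℂ be smooth, K-pseudo-periodic, and satisfy Φ(Rᵀx) = τ′·Φ(x) for all x, where τ′ = τ or τ′ = conj(τ). Then the vector ∫_Ω conj(Φ(x))·(𝒜Φ)(x) dx ∈ ℂ² is equal to zero. -/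
/-!
The integrand `F = conj Φ · 𝒜Φ` is `Λ`-periodic, since the phases of `Φ` cancel against those of its
conjugate, and it satisfies `F(Rᵀx) = Rᵀ F(x)`, since the chain rule and the equivariance of `A` give
`(𝒜Φ)(Rᵀx) = τ' Rᵀ (𝒜Φ)(x)` and `|τ'| = 1`. As `Rᵀ` preserves `Λ` and Lebesgue measure, `Rᵀ Ω` is,
up to a null set, another fundamental domain, so that `∫_Ω F = ∫_Ω F ∘ Rᵀ = Rᵀ ∫_Ω F`
(`integral_cellΩ_comp_Rt`). The rotation `Rᵀ` does not have the eigenvalue `1`, hence the integral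
vanishes.
-/

noncomputable section

open MeasureTheory

/-! ### The rotation and the lattice -/

lemma sqrt_three_sq : Real.sqrt 3 ^ 2 = 3 := Real.sq_sqrt (by norm_num)

lemma Rt_eq (x : Vec) :
    Rt x = ![-(1 / 2) * x 0 - Real.sqrt 3 / 2 * x 1, Real.sqrt 3 / 2 * x 0 - 1 / 2 * x 1] := by
  ext i
  fin_cases i <;>
    simp [Rt, Rrot, Matrix.mulVec, dotProduct, Fin.sum_univ_two] <;> ring

lemma det_Rrot_transpose : Rrot.transpose.det = 1 := by
  rw [Matrix.det_transpose, Rrot, Matrix.det_fin_two_of]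
  linear_combination sqrt_three_sq / 4

/-- The map `x ↦ Rᵀx` as a linear automorphism of the plane. -/
def RtEquiv : Vec ≃ₗ[ℝ] Vec :=
  Matrix.toLinearEquiv' Rrot.transpose
    (Matrix.invertibleOfIsUnitDet _ (by rw [det_Rrot_transpose]; exact isUnit_one))

lemma RtEquiv_apply (x : Vec) : RtEquiv x = Rt x := rfl

/-- The map `x ↦ Rᵀx` as a continuous linear map. -/
def RtCLM : Vec →L[ℝ] Vec := LinearMap.toContinuousLinearMap (Matrix.toLin' Rrot.transpose)

lemma RtCLM_apply (x : Vec) : RtCLM x = Rt x := rfl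

lemma det_RtCLM : RtCLM.det = 1 := by
  change LinearMap.det (Matrix.toLin' Rrot.transpose) = 1
  rw [LinearMap.det_toLin', det_Rrot_transpose]

lemma Rt_latv₁ : Rt latv₁ = -latv₂ := by
  rw [Rt_eq]
  ext i
  fin_cases i
  · simp [latv₁, latv₂]; ring
  · simp [latv₁, latv₂]; linear_combination sqrt_three_sq / 4

lemma Rt_latv₂ : Rt latv₂ = latv₁ - latv₂ := by
  rw [Rt_eq]
  ext i
  fin_cases i
  · simp [latv₁, latv₂]; ring
  · simp [latv₁, latv₂]; linear_combination sqrt_three_sq / 4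

lemma linearIndependent_lat : LinearIndependent ℝ ![latv₁, latv₂] := by
  rw [LinearIndependent.pair_iff]
  intro s t h
  have h0 := congrFun h 0
  have h1 := congrFun h 1
  simp [latv₁, latv₂] at h0 h1
  have h3 : Real.sqrt 3 ≠ 0 := by positivity
  have h4 : s + t = 0 := by
    have : Real.sqrt 3 * (s + t) = 0 := by linear_combination 2 * h0
    simpa [h3] using this
  constructor <;> linarith

/-- The basis `(v₁, v₂)` of the plane. -/
def latBasis : Module.Basis (Fin 2) ℝ Vec :=
  basisOfLinearIndependentOfCardEqFinrank linearIndependent_lat (by simp)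

lemma coe_latBasis : (latBasis : Fin 2 → Vec) = ![latv₁, latv₂] := by
  simp [latBasis]

lemma cellΩ_eq_parallelepiped : cellΩ = parallelepiped latBasis := by
  ext x
  rw [mem_parallelepiped_iff, coe_latBasis]
  constructor
  · rintro ⟨a, ha, b, hb, rfl⟩
    refine ⟨![a, b], ⟨?_, ?_⟩, by simp⟩
    · intro i; fin_cases i
      · exact ha.1
      · exact hb.1
    · intro i; fin_cases i
      · exact ha.2
      · exact hb.2
  · rintro ⟨t, ht, rfl⟩
    exact ⟨t 0, ⟨ht.1 0, ht.2 0⟩, t 1, ⟨ht.1 1, ht.2 1⟩, by simp⟩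

lemma isCompact_cellΩ : IsCompact cellΩ := by
  rw [cellΩ_eq_parallelepiped]
  exact latBasis.parallelepiped.isCompact

lemma mem_TriLat_of_mem_span {v : Vec} (hv : v ∈ Submodule.span ℤ (Set.range latBasis)) :
    v ∈ TriLat := by
  rw [coe_latBasis, Matrix.range_cons, Matrix.range_cons, Matrix.range_empty, Set.union_empty,
    Set.singleton_union, Submodule.mem_span_pair] at hv
  obtain ⟨a, b, rfl⟩ := hv
  exact ⟨a, b, by simp only [Int.cast_smul_eq_zsmul]⟩

/-- The rotation `Rᵀ` maps the lattice `Λ` onto itself. -/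
lemma span_latBasis_map :
    Submodule.span ℤ (Set.range (latBasis.map RtEquiv)) =
      Submodule.span ℤ (Set.range latBasis) := by
  have h : (latBasis.map RtEquiv : Fin 2 → Vec) = ![-latv₂, latv₁ - latv₂] := by
    ext1 i
    rw [Module.Basis.map_apply, RtEquiv_apply, coe_latBasis]
    fin_cases i
    · exact Rt_latv₁
    · exact Rt_latv₂
  rw [h, coe_latBasis]
  simp only [Matrix.range_cons, Matrix.range_empty, Set.union_empty, Set.singleton_union]
  apply le_antisymm
  · rw [Submodule.span_le]
    rintro x (rfl | rfl)
    · exact Submodule.mem_span_pair.2 ⟨0, -1, by simp⟩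
    · exact Submodule.mem_span_pair.2 ⟨1, -1, by simp [sub_eq_add_neg]⟩
  · rw [Submodule.span_le]
    rintro x (rfl | rfl)
    · exact Submodule.mem_span_pair.2 ⟨-1, 1, by simp⟩
    · exact Submodule.mem_span_pair.2 ⟨-1, 0, by simp⟩

/-- The integral of a `Λ`-periodic function over `Ω` is invariant under the rotation `Rᵀ`: both
`Ω` and `Rᵀ Ω` are fundamental domains of `Λ` up to null sets, and `Rᵀ` has determinant `1`. -/
lemma integral_cellΩ_comp_Rt (F : Vec → ℂ) (hF : ∀ x, ∀ v ∈ TriLat, F (x + v) = F x) :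
    ∫ x in cellΩ, F (Rt x) = ∫ x in cellΩ, F x := by
  have hae : cellΩ =ᵐ[volume] ZSpan.fundamentalDomain latBasis := by
    rw [cellΩ_eq_parallelepiped]
    exact (ZSpan.fundamentalDomain_ae_parallelepiped latBasis volume).symm
  rw [setIntegral_congr_set hae, setIntegral_congr_set hae]
  have h1 := ZSpan.isAddFundamentalDomain' latBasis (volume : Measure Vec)
  have h2 := ZSpan.isAddFundamentalDomain' (latBasis.map RtEquiv) (volume : Measure Vec)
  rw [span_latBasis_map, ← ZSpan.map_fundamentalDomain] at h2
  have h3 : ∫ x in ZSpan.fundamentalDomain latBasis, F x =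
      ∫ x in RtEquiv '' ZSpan.fundamentalDomain latBasis, F x := by
    have : Countable (Submodule.span ℤ (Set.range latBasis)).toAddSubgroup :=
      inferInstanceAs (Countable (Submodule.span ℤ (Set.range latBasis)))
    refine h1.setIntegral_eq h2 ?_
    rintro ⟨v, hv⟩ x
    change F (v + x) = F x
    rw [add_comm]
    exact hF x v (mem_TriLat_of_mem_span hv)
  rw [h3]
  have h4 := integral_image_eq_integral_abs_det_fderiv_smul (volume : Measure Vec)
    (ZSpan.fundamentalDomain_measurableSet latBasis) (f := Rt) (f' := fun _ => RtCLM)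
    (fun x _ => RtCLM.hasFDerivAt.hasFDerivWithinAt) RtEquiv.injective.injOn F
  simp only [det_RtCLM, abs_one, one_smul] at h4
  exact h4.symm

/-! ### Partial derivatives -/

lemma pd_continuous {f : Vec → ℂ} (hf : ContDiff ℝ (⊤ : ℕ∞) f) (i : Fin 2) :
    Continuous (pd i f) :=
  (hf.continuous_fderiv (by simp)).clm_apply continuous_const

lemma pd_shift {f : Vec → ℂ} {v : Vec} {c : ℂ} (hfd : Differentiable ℝ f)
    (h : ∀ x, f (x + v) = c * f x) (i : Fin 2) (x : Vec) : pd i f (x + v) = c * pd i f x := by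
  unfold pd
  rw [← fderiv_comp_add_right, funext h, fderiv_const_mul hfd.differentiableAt]
  simp

lemma pd_comp_Rt {f : Vec → ℂ} (hf : Differentiable ℝ f) (i : Fin 2) (x : Vec) :
    pd i (fun y => f (Rt y)) x = fderiv ℝ f (Rt x) (Rt (Pi.single i 1)) := by
  have h : HasFDerivAt (fun y => f (Rt y)) ((fderiv ℝ f (Rt x)).comp RtCLM) x :=
    (hf (Rt x)).hasFDerivAt.comp x RtCLM.hasFDerivAt
  rw [pd, h.fderiv]
  rfl

lemma fderiv_eq_pd (f : Vec → ℂ) (x : Vec) (a b : ℝ) :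
    fderiv ℝ f x ![a, b] = a * pd 0 f x + b * pd 1 f x := by
  have : (![a, b] : Vec) = a • Pi.single 0 1 + b • Pi.single 1 1 := by
    ext i; fin_cases i <;> simp
  rw [this, map_add, map_smul, map_smul, Complex.real_smul, Complex.real_smul]
  rfl

lemma sqrt_three_sq_complex : ((Real.sqrt 3 : ℝ) : ℂ) ^ 2 = 3 := by
  exact_mod_cast congrArg ((↑) : ℝ → ℂ) sqrt_three_sq

lemma pd_zero_Rt {f : Vec → ℂ} (hf : Differentiable ℝ f) (x : Vec) :
    pd 0 f (Rt x) = -(1 / 2) * pd 0 (fun y => f (Rt y)) x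
      - (Real.sqrt 3 : ℝ) / 2 * pd 1 (fun y => f (Rt y)) x := by
  rw [pd_comp_Rt hf, pd_comp_Rt hf, Rt_eq (Pi.single 0 1), Rt_eq (Pi.single 1 1),
    fderiv_eq_pd, fderiv_eq_pd]
  simp
  linear_combination -(pd 0 f (Rt x)) / 4 * sqrt_three_sq_complex

lemma pd_one_Rt {f : Vec → ℂ} (hf : Differentiable ℝ f) (x : Vec) :
    pd 1 f (Rt x) = (Real.sqrt 3 : ℝ) / 2 * pd 0 (fun y => f (Rt y)) x
      - 1 / 2 * pd 1 (fun y => f (Rt y)) x := by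
  rw [pd_comp_Rt hf, pd_comp_Rt hf, Rt_eq (Pi.single 0 1), Rt_eq (Pi.single 1 1),
    fderiv_eq_pd, fderiv_eq_pd]
  simp
  linear_combination -(pd 1 f (Rt x)) / 4 * sqrt_three_sq_complex

lemma pd_lincomb {f : Fin 2 → Fin 2 → Vec → ℂ} (hf : ∀ i j, Differentiable ℝ (f i j))
    (a b c d : ℂ) (i : Fin 2) (x : Vec) :
    pd i (fun y => a * f 0 0 y + b * f 0 1 y + c * f 1 0 y + d * f 1 1 y) x =
      a * pd i (f 0 0) x + b * pd i (f 0 1) x + c * pd i (f 1 0) x + d * pd i (f 1 1) x := by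
  have h := ((((hf 0 0 x).hasFDerivAt.const_mul a).add ((hf 0 1 x).hasFDerivAt.const_mul b)).add
    ((hf 1 0 x).hasFDerivAt.const_mul c)).add ((hf 1 1 x).hasFDerivAt.const_mul d)
  have happ := congrArg (fun L : Vec →L[ℝ] ℂ => L (Pi.single i 1)) h.fderiv
  simp only [add_apply, smul_apply, smul_eq_mul] at happ
  exact happ

/-! ### Rotation behaviour of `𝒜Φ` -/

lemma A_Rt_entries {A B : Matrix (Fin 2) (Fin 2) ℂ}
    (h : B = (Rrot.map (Complex.ofReal)).transpose * A * Rrot.map (Complex.ofReal)) :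
    B 0 0 = 1 / 4 * A 0 0 + (Real.sqrt 3 : ℝ) / 4 * A 0 1 + (Real.sqrt 3 : ℝ) / 4 * A 1 0
        + 3 / 4 * A 1 1 ∧
    B 0 1 = -((Real.sqrt 3 : ℝ) / 4) * A 0 0 + 1 / 4 * A 0 1 + -(3 / 4) * A 1 0
        + (Real.sqrt 3 : ℝ) / 4 * A 1 1 ∧
    B 1 0 = -((Real.sqrt 3 : ℝ) / 4) * A 0 0 + -(3 / 4) * A 0 1 + 1 / 4 * A 1 0
        + (Real.sqrt 3 : ℝ) / 4 * A 1 1 ∧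
    B 1 1 = 3 / 4 * A 0 0 + -((Real.sqrt 3 : ℝ) / 4) * A 0 1 + -((Real.sqrt 3 : ℝ) / 4) * A 1 0
        + 1 / 4 * A 1 1 := by
  subst h
  refine ⟨?_, ?_, ?_, ?_⟩ <;>
    simp [Rrot, Matrix.mul_apply, Fin.sum_univ_two]
  · linear_combination A 1 1 / 4 * sqrt_three_sq_complex
  · linear_combination -A 1 0 / 4 * sqrt_three_sq_complex
  · linear_combination -A 0 1 / 4 * sqrt_three_sq_complex
  · linear_combination A 0 0 / 4 * sqrt_three_sq_complex

/-- `(𝒜Φ)(Rᵀx) = τ' Rᵀ (𝒜Φ)(x)`, written out in coordinates. -/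
lemma calA_Rt (A : Vec → Matrix (Fin 2) (Fin 2) ℂ)
    (hA : ∀ i j : Fin 2, Differentiable ℝ fun x => A x i j)
    (hA_rot : ∀ x : Vec,
      A (Rt x) = (Rrot.map (Complex.ofReal)).transpose * A x * Rrot.map (Complex.ofReal))
    (τ' : ℂ) (Φ : Vec → ℂ) (hΦ : Differentiable ℝ Φ)
    (hΦ_rot : ∀ x : Vec, Φ (Rt x) = τ' * Φ x) (x : Vec) :
    calA A Φ 0 (Rt x) =
        τ' * (-(1 / 2) * calA A Φ 0 x - (Real.sqrt 3 : ℝ) / 2 * calA A Φ 1 x) ∧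
      calA A Φ 1 (Rt x) =
        τ' * ((Real.sqrt 3 : ℝ) / 2 * calA A Φ 0 x - 1 / 2 * calA A Φ 1 x) := by
  set B : Fin 2 → Fin 2 → Vec → ℂ := fun i j y => A y i j * Φ y with hB
  have hBd : ∀ i j, Differentiable ℝ (B i j) := fun i j => (hA i j).mul hΦ
  have hΦk : ∀ k, pd k (fun y => Φ (Rt y)) x = τ' * pd k Φ x := by
    intro k
    unfold pd
    rw [funext hΦ_rot, fderiv_const_mul hΦ.differentiableAt]
    simp
  set s : ℂ := ((Real.sqrt 3 : ℝ) : ℂ) with hs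
  have hs2 : s ^ 2 = 3 := sqrt_three_sq_complex
  have hB00 : (fun y => B 0 0 (Rt y)) = fun y => τ' * (1 / 4) * B 0 0 y + τ' * (s / 4) * B 0 1 y
      + τ' * (s / 4) * B 1 0 y + τ' * (3 / 4) * B 1 1 y := by
    funext y
    simp only [hB, hΦ_rot, (A_Rt_entries (hA_rot y)).1]
    ring
  have hB01 : (fun y => B 0 1 (Rt y)) = fun y => τ' * (-(s / 4)) * B 0 0 y
      + τ' * (1 / 4) * B 0 1 y + τ' * (-(3 / 4)) * B 1 0 y + τ' * (s / 4) * B 1 1 y := by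
    funext y
    simp only [hB, hΦ_rot, (A_Rt_entries (hA_rot y)).2.1]
    ring
  have hB10 : (fun y => B 1 0 (Rt y)) = fun y => τ' * (-(s / 4)) * B 0 0 y
      + τ' * (-(3 / 4)) * B 0 1 y + τ' * (1 / 4) * B 1 0 y + τ' * (s / 4) * B 1 1 y := by
    funext y
    simp only [hB, hΦ_rot, (A_Rt_entries (hA_rot y)).2.2.1]
    ring
  have hB11 : (fun y => B 1 1 (Rt y)) = fun y => τ' * (3 / 4) * B 0 0 y
      + τ' * (-(s / 4)) * B 0 1 y + τ' * (-(s / 4)) * B 1 0 y + τ' * (1 / 4) * B 1 1 y := by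
    funext y
    simp only [hB, hΦ_rot, (A_Rt_entries (hA_rot y)).2.2.2]
    ring
  have hcalA : ∀ j y, calA A Φ j y = Complex.I⁻¹ *
      ((A y j 0 * pd 0 Φ y + A y j 1 * pd 1 Φ y) + (pd 0 (B 0 j) y + pd 1 (B 1 j) y)) := by
    intro j y
    simp [calA, Fin.sum_univ_two, hB]
  obtain ⟨a00, a01, a10, a11⟩ := A_Rt_entries (hA_rot x)
  rw [← hs] at a00 a01 a10 a11
  constructor
  · rw [hcalA, hcalA, hcalA, pd_zero_Rt hΦ, pd_one_Rt hΦ, pd_zero_Rt (hBd 0 0),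
      pd_one_Rt (hBd 1 0), hB00, hB10, hΦk, hΦk, a00, a01]
    simp only [pd_lincomb hBd, ← hs]
    generalize hI : Complex.I⁻¹ = u
    grind
  · rw [hcalA, hcalA, hcalA, pd_zero_Rt hΦ, pd_one_Rt hΦ, pd_zero_Rt (hBd 0 1),
      pd_one_Rt (hBd 1 1), hB01, hB11, hΦk, hΦk, a10, a11]
    simp only [pd_lincomb hBd, ← hs]
    generalize hI : Complex.I⁻¹ = u
    grind

lemma calA_continuous (A : Vec → Matrix (Fin 2) (Fin 2) ℂ)
    (hA : ∀ i j : Fin 2, ContDiff ℝ (⊤ : ℕ∞) fun x => A x i j)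
    (Φ : Vec → ℂ) (hΦ : ContDiff ℝ (⊤ : ℕ∞) Φ) (j : Fin 2) : Continuous (calA A Φ j) := by
  unfold calA
  refine continuous_const.mul (Continuous.add ?_ ?_)
  · exact continuous_finsetSum _ fun k _ => (hA j k).continuous.mul (pd_continuous hΦ k)
  · exact continuous_finsetSum _ fun i _ => pd_continuous ((hA i j).mul hΦ) i

/-- `𝒜Φ` inherits the phase factor of `Φ` under a period of `A`. -/
lemma calA_shift (A : Vec → Matrix (Fin 2) (Fin 2) ℂ)
    (hA : ∀ i j : Fin 2, Differentiable ℝ fun x => A x i j)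
    (Φ : Vec → ℂ) (hΦ : Differentiable ℝ Φ) {v : Vec} {c : ℂ}
    (hAv : ∀ x, A (x + v) = A x) (hΦv : ∀ x, Φ (x + v) = c * Φ x) (j : Fin 2) (x : Vec) :
    calA A Φ j (x + v) = c * calA A Φ j x := by
  have h : ∀ i, pd i (fun y => A y i j * Φ y) (x + v) = c * pd i (fun y => A y i j * Φ y) x := by
    intro i
    refine pd_shift ((hA i j).mul hΦ) (fun y => ?_) i x
    change A (y + v) i j * Φ (y + v) = c * (A y i j * Φ y)
    rw [hAv, hΦv]
    ring
  simp only [calA, Fin.sum_univ_two, h, pd_shift hΦ hΦv, hAv]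
  ring

lemma conj_mul_self_exp (t : ℝ) :
    (starRingEnd ℂ) (Complex.exp (Complex.I * t)) * Complex.exp (Complex.I * t) = 1 := by
  rw [← Complex.exp_conj, ← Complex.exp_add]
  simp

lemma conj_mul_self_τ : (starRingEnd ℂ) τ * τ = 1 := by
  have h : τ = Complex.exp (Complex.I * ((2 * Real.pi / 3 : ℝ) : ℂ)) := by
    rw [τ]; congr 1; push_cast; ring
  rw [h]
  exact conj_mul_self_exp _

/-- For A smooth, Λ-periodic and R-equivariant
(A(Rᵀx) = Rᵀ A(x) R), and Φ smooth, K-pseudo-periodic with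
Φ(Rᵀx) = τ′Φ(x) where τ′ ∈ {τ, conj τ}, the vector
∫_Ω conj(Φ)·(𝒜Φ) dx ∈ ℂ² vanishes. -/
theorem stmt2 (A : Vec → Matrix (Fin 2) (Fin 2) ℂ)
    (hA_smooth : ∀ i j : Fin 2, ContDiff ℝ (⊤ : ℕ∞) fun x => A x i j)
    (hA_per : ∀ x : Vec, ∀ v ∈ TriLat, A (x + v) = A x)
    (hA_rot : ∀ x : Vec,
      A (Rt x) = (Rrot.map (Complex.ofReal)).transpose * A x * Rrot.map (Complex.ofReal))
    (τ' : ℂ) (hτ' : τ' = τ ∨ τ' = (starRingEnd ℂ) τ)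
    (Φ : Vec → ℂ) (hΦ_smooth : ContDiff ℝ (⊤ : ℕ∞) Φ) (hΦ_pp : PseudoPeriodic Φ)
    (hΦ_rot : ∀ x : Vec, Φ (Rt x) = τ' * Φ x) :
    ∀ j : Fin 2, (∫ x in cellΩ, (starRingEnd ℂ) (Φ x) * calA A Φ j x) = 0 := by
  have hA : ∀ i j : Fin 2, Differentiable ℝ fun x => A x i j :=
    fun i j => (hA_smooth i j).differentiable (by simp)
  have hΦ : Differentiable ℝ Φ := hΦ_smooth.differentiable (by simp)
  have hτ : (starRingEnd ℂ) τ' * τ' = 1 := by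
    rcases hτ' with rfl | rfl
    · exact conj_mul_self_τ
    · rw [Complex.conj_conj, mul_comm]
      exact conj_mul_self_τ
  set F : Fin 2 → Vec → ℂ := fun j x => (starRingEnd ℂ) (Φ x) * calA A Φ j x with hF
  have hper : ∀ j, ∀ x, ∀ v ∈ TriLat, F j (x + v) = F j x := by
    intro j x v hv
    simp only [hF]
    rw [calA_shift A hA Φ hΦ (fun y => hA_per y v hv) (fun y => hΦ_pp y v hv), hΦ_pp x v hv,
      map_mul]
    linear_combination (starRingEnd ℂ) (Φ x) * calA A Φ j x * conj_mul_self_exp (dot Kpt v)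
  have hint : ∀ j, IntegrableOn (F j) cellΩ := by
    intro j
    refine ContinuousOn.integrableOn_compact isCompact_cellΩ (Continuous.continuousOn ?_)
    exact (Complex.continuous_conj.comp hΦ_smooth.continuous).mul
      (calA_continuous A hA_smooth Φ hΦ_smooth j)
  set s : ℂ := ((Real.sqrt 3 : ℝ) : ℂ) with hs
  have hs2 : s ^ 2 = 3 := sqrt_three_sq_complex
  have hrot := calA_Rt A hA hA_rot τ' Φ hΦ hΦ_rot
  have hF0 : ∀ x, F 0 (Rt x) = -(1 / 2) * F 0 x - s / 2 * F 1 x := by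
    intro x
    simp only [hF]
    rw [hΦ_rot, (hrot x).1, map_mul]
    linear_combination (starRingEnd ℂ) (Φ x) *
      (-(1 / 2) * calA A Φ 0 x - s / 2 * calA A Φ 1 x) * hτ
  have hF1 : ∀ x, F 1 (Rt x) = s / 2 * F 0 x - 1 / 2 * F 1 x := by
    intro x
    simp only [hF]
    rw [hΦ_rot, (hrot x).2, map_mul]
    linear_combination (starRingEnd ℂ) (Φ x) *
      (s / 2 * calA A Φ 0 x - 1 / 2 * calA A Φ 1 x) * hτ
  have e0 := integral_cellΩ_comp_Rt (F 0) (hper 0)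
  have e1 := integral_cellΩ_comp_Rt (F 1) (hper 1)
  simp only [hF0] at e0
  simp only [hF1] at e1
  rw [integral_sub ((hint 0).const_mul _) ((hint 1).const_mul _), integral_const_mul,
    integral_const_mul] at e0 e1
  -- `e0` and `e1` say that the integral is a fixed vector of `Rᵀ`; since `det (Rᵀ - 1) = 3`, it is
  -- zero by Cramer's rule.
  intro j
  change ∫ x in cellΩ, F j x = 0
  fin_cases j
  · change ∫ x in cellΩ, F 0 x = 0
    linear_combination -(1 / 2) * e0 + s / 6 * e1 - (∫ x in cellΩ, F 0 x) / 12 * hs2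
  · change ∫ x in cellΩ, F 1 x = 0
    linear_combination -(s / 6) * e0 - 1 / 2 * e1 - (∫ x in cellΩ, F 1 x) / 12 * hs2
end
end
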